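/- Let L = 2m+1 ≥ 3 be an odd prime. Then the polynomial f^{F,L}_{L²}(x) does not have all integer coefficients; that is, some coefficient of f^{F,L}_{L²} (in particular its coefficient of x³) is not an integer. -/

import Mathlib

open Matrix Polynomial

/-- The M-type Grover coin `A^{M,L}` for `L = 2m+1`: diagonal entries `-(2m-1)/L`,
off-diagonal entries `2/L`. -/
noncomputable def coinM (m : ℕ) : Matrix (Fin (2*m+1)) (Fin (2*m+1)) ℂ :=
  fun i j => if i = j then (1 - 2*(m:ℂ)) / (2*(m:ℂ)+1) else 2 / (2*(m:ℂ)+1)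

/-- The F-type Grover coin `A^{F,L}` for `L = 2m+1`: anti-diagonal entries `-(2m-1)/L`,
all other entries `2/L`. -/
noncomputable def coinF (m : ℕ) : Matrix (Fin (2*m+1)) (Fin (2*m+1)) ℂ :=
  fun i j => if (i : ℕ) + (j : ℕ) = 2*m then (1 - 2*(m:ℂ)) / (2*(m:ℂ)+1)
    else 2 / (2*(m:ℂ)+1)

/-- The time-evolution operator of the `L`-state (`L = 2m+1`) Grover walk with local coin `A`
on the cycle `C_N`: entry at `((v,i),(w,j))` is `A i j` if `v ≡ w + (i - m) (mod N)`,
and `0` otherwise. -/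
noncomputable def walkU (m N : ℕ) (A : Matrix (Fin (2*m+1)) (Fin (2*m+1)) ℂ) :
    Matrix ((ZMod N) × Fin (2*m+1)) ((ZMod N) × Fin (2*m+1)) ℂ :=
  fun p q => if p.1 = q.1 + ((p.2 : ℕ) : ZMod N) - (m : ZMod N) then A p.2 q.2 else 0

/-- `ζ_N = exp(2πi/N)`. -/
noncomputable def zetaN (N : ℕ) : ℂ := Complex.exp (2 * Real.pi * Complex.I / N)

/-- The diagonal matrix `Z = diag(ζ_N^m, ζ_N^{m-1}, …, ζ_N^{-m})`. -/
noncomputable def Zmat (N m : ℕ) : Matrix (Fin (2*m+1)) (Fin (2*m+1)) ℂ :=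
  Matrix.diagonal fun i => zetaN N ^ ((m : ℤ) - ((i : ℕ) : ℤ))

/-- The integer power `Z^k` of the diagonal matrix `Z`, defined for any `k ∈ ℤ`. -/
noncomputable def ZmatPow (N m : ℕ) (k : ℤ) : Matrix (Fin (2*m+1)) (Fin (2*m+1)) ℂ :=
  Matrix.diagonal fun i => zetaN N ^ ((((m : ℤ) - ((i : ℕ) : ℤ))) * k)

/-- `f^{M,L}_{N,k}(x) = det(x·I_L − Z^k A^{M,L})`. -/
noncomputable def fMk (m N : ℕ) (k : ℤ) : Polynomial ℂ :=
  (ZmatPow N m k * coinM m).charpoly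

/-- `f^{M,L}_N(x) = ∏_{k=0}^{N-1} f^{M,L}_{N,k}(x)`. -/
noncomputable def fM (m N : ℕ) : Polynomial ℂ :=
  ∏ k ∈ Finset.range N, fMk m N (k : ℤ)

/-- `f^{F,L}_{N,k}(x) = det(x·I_L − Z^k A^{F,L})`. -/
noncomputable def fFk (m N : ℕ) (k : ℤ) : Polynomial ℂ :=
  (ZmatPow N m k * coinF m).charpoly

/-- `f^{F,L}_N(x) = ∏_{k=0}^{N-1} f^{F,L}_{N,k}(x)`. -/
noncomputable def fF (m N : ℕ) : Polynomial ℂ :=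
  ∏ k ∈ Finset.range N, fFk m N (k : ℤ)

/-! Conjugating `Z^k A` by a square root of `Z^k` turns it into a rank-one perturbation of minus
the anti-diagonal permutation matrix. Hence, up to factors independent of `k` that lie in `ℤ[x]`
and have constant term `±1`, `f_{N,k}` is `x² - tₖ x + 1` with `tₖ = (2/L) tr(Z^k)`, and
integrality of the coefficient of `x³` passes from `f_N` to `∏ₖ (x² - tₖ x + 1)`. For `N = c L²`
the sums `∑ tₖ` and `∑ tₖ²` are integers, so by Newton's identities `2 ∑ tₖ³` would be an integer
as well. But orthogonality of roots of unity gives `L ∑ tₖ³ = 2c(3L² + 1)`, which would force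
`L ∣ c`. -/

section CharpolyInvolution

variable {R n : Type*} [CommRing R] [Fintype n] [DecidableEq n]

lemma mul_det_smul_one_sub_vecMulVec (s : R) (u v : n → R) :
    s * (s • (1 : Matrix n n R) - vecMulVec u v).det = s ^ Fintype.card n * (s - u ⬝ᵥ v) := by
  have h := eval_charpoly (vecMulVec u v) s
  rw [charpoly_vecMulVec, scalar_apply, ← smul_one_eq_diagonal] at h
  rw [← h]
  rcases isEmpty_or_nonempty n with hn | hn
  · simp
  · obtain ⟨d, hd⟩ := Nat.exists_eq_succ_of_ne_zero (Fintype.card_ne_zero (α := n))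
    simp only [hd, Nat.succ_eq_add_one, Nat.add_sub_cancel, eval_sub, eval_pow, eval_X,
      eval_smul, smul_eq_mul]
    ring

variable {B : Matrix n n R}

lemma charmatrix_mul_charmatrix_neg (hB : B * B = 1) :
    B.charmatrix * (-B).charmatrix = (X ^ 2 - 1 : R[X]) • (1 : Matrix n n R[X]) := by
  have hBC : B.map C * B.map C = (1 : Matrix n n R[X]) := by
    rw [← Matrix.map_mul, hB, Matrix.map_one C C_0 C_1]
  simp only [charmatrix, scalar_apply, ← smul_one_eq_diagonal, map_neg, sub_neg_eq_add,
    RingHom.mapMatrix_apply, Matrix.sub_mul, Matrix.mul_add, Matrix.smul_mul, Matrix.mul_smul,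
    Matrix.one_mul, Matrix.mul_one, hBC]
  module

lemma charpoly_vecMulVec_sub_of_mul_self_eq_one (hB : B * B = 1) (u v : n → R) :
    (X ^ 2 - 1) * (vecMulVec u v - B).charpoly =
      (-B).charpoly * (X ^ 2 - 1 - C (u ⬝ᵥ v) * X + C (B *ᵥ u ⬝ᵥ v)) := by
  set u' : n → R[X] := C ∘ u with hu
  set v' : n → R[X] := C ∘ v with hv
  have hsplit : (vecMulVec u v - B).charmatrix = (-B).charmatrix - vecMulVec u' v' := by
    ext i j
    simp only [charmatrix, scalar_apply, RingHom.mapMatrix_apply, Matrix.sub_apply,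
      Matrix.map_apply, Matrix.neg_apply, vecMulVec_apply, map_sub, map_neg, map_mul, hu, hv,
      Function.comp_apply]
    ring_nf
  have hmul : B.charmatrix * (vecMulVec u v - B).charmatrix =
      (X ^ 2 - 1 : R[X]) • (1 : Matrix n n R[X]) - vecMulVec (B.charmatrix *ᵥ u') v' := by
    rw [hsplit, Matrix.mul_sub, charmatrix_mul_charmatrix_neg hB, mul_vecMulVec]
  have hdot : B.charmatrix *ᵥ u' ⬝ᵥ v' = C (u ⬝ᵥ v) * X - C (B *ᵥ u ⬝ᵥ v) := by
    have hBu : B.map C *ᵥ u' = C ∘ (B *ᵥ u) := funext fun i => (RingHom.map_mulVec C B u i).symm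
    rw [charmatrix, scalar_apply, ← smul_one_eq_diagonal, RingHom.mapMatrix_apply, sub_mulVec,
      smul_mulVec, one_mulVec, hBu, sub_dotProduct, smul_dotProduct, RingHom.map_dotProduct,
      RingHom.map_dotProduct, smul_eq_mul, mul_comm]
  have hdet : B.charpoly * (-B).charpoly = (X ^ 2 - 1) ^ Fintype.card n := by
    rw [charpoly, charpoly, ← det_mul, charmatrix_mul_charmatrix_neg hB, det_smul, det_one,
      mul_one]
  have hrank := mul_det_smul_one_sub_vecMulVec (X ^ 2 - 1) (B.charmatrix *ᵥ u') v'
  rw [← hmul, det_mul, ← charpoly, ← charpoly, ← hdet, hdot] at hrank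
  refine (charpoly_monic B).isRegular.left ?_
  linear_combination hrank

end CharpolyInvolution

section CoeffRange

variable {R A : Type*} [CommRing R] [CommRing A]

lemma coeff_mem_range_of_coeff_map_mul_mem_range {φ : R →+* A} {G : R[X]}
    (hG : IsUnit (G.coeff 0)) {p : A[X]} {n : ℕ}
    (h : ∀ j < n, (G.map φ * p).coeff j ∈ φ.range) : ∀ j < n, p.coeff j ∈ φ.range := by
  intro j hj
  induction j using Nat.strong_induction_on with
  | _ j ih =>
    obtain ⟨r, hr⟩ := hG.exists_left_inv
    have htail : (G.map φ * p).coeff j - φ (G.coeff 0) * p.coeff j ∈ φ.range := by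
      rw [coeff_mul, Finset.Nat.sum_antidiagonal_eq_sum_range_succ
        (fun a b => (G.map φ).coeff a * p.coeff b), Finset.sum_range_succ', Nat.sub_zero,
        coeff_map, add_sub_cancel_right]
      refine sum_mem fun i hi => mul_mem ?_ (ih _ ?_ ?_)
      · exact coeff_map φ (i + 1) ▸ ⟨_, rfl⟩
      all_goals have := Finset.mem_range.mp hi; omega
    have hhead := mul_mem (⟨r, rfl⟩ : φ r ∈ φ.range) (sub_mem (h j hj) htail)
    rwa [sub_sub_cancel, ← mul_assoc, ← map_mul, hr, map_one, one_mul] at hhead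

lemma coeff_map_mul_mem_range {φ : R →+* A} (G : R[X]) {p : A[X]} {n : ℕ}
    (h : ∀ j < n, p.coeff j ∈ φ.range) : ∀ j < n, (G.map φ * p).coeff j ∈ φ.range := by
  intro j hj
  rw [coeff_mul]
  refine sum_mem fun x hx => mul_mem (coeff_map φ x.1 ▸ ⟨_, rfl⟩) (h _ ?_)
  have := Finset.HasAntidiagonal.mem_antidiagonal.mp hx
  omega

end CoeffRange

/-- The product of the self-reciprocal quadratics `x² - tₖ x + 1` over `k ∈ s`, the shape of the
nontrivial part of `f^{F,L}_N`. -/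
noncomputable def reciprocalQuadProd {R ι : Type*} [CommRing R] (s : Finset ι) (t : ι → R) :
    R[X] :=
  ∏ k ∈ s, (X ^ 2 + 1 - C (t k) * X)

namespace reciprocalQuadProd

variable {R ι : Type*} [CommRing R] {s : Finset ι} {a : ι} {t : ι → R}

lemma insert_eq [DecidableEq ι] (ha : a ∉ s) : reciprocalQuadProd (insert a s) t =
    reciprocalQuadProd s t * X ^ 2 + reciprocalQuadProd s t
      - C (t a) * (reciprocalQuadProd s t * X) := by
  rw [reciprocalQuadProd, Finset.prod_insert ha, ← reciprocalQuadProd]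
  ring

lemma coeff_insert_add_two [DecidableEq ι] (ha : a ∉ s) (n : ℕ) :
    (reciprocalQuadProd (insert a s) t).coeff (n + 2) = (reciprocalQuadProd s t).coeff n
      + (reciprocalQuadProd s t).coeff (n + 2) - t a * (reciprocalQuadProd s t).coeff (n + 1) := by
  rw [insert_eq ha, coeff_sub, coeff_add, coeff_mul_X_pow, coeff_C_mul, coeff_mul_X]

variable (s t)

lemma coeff_zero : (reciprocalQuadProd s t).coeff 0 = 1 := by
  simp [reciprocalQuadProd, coeff_zero_eq_eval_zero, eval_prod]

lemma coeff_one : (reciprocalQuadProd s t).coeff 1 = -∑ k ∈ s, t k := by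
  classical
  induction s using Finset.induction_on with
  | empty => simp [reciprocalQuadProd, Polynomial.coeff_one]
  | insert a s ha ih =>
    rw [insert_eq ha, coeff_sub, coeff_add, coeff_mul_X_pow', coeff_C_mul, coeff_mul_X, ih,
      coeff_zero, Finset.sum_insert ha, if_neg (by norm_num)]
    ring

lemma two_mul_coeff_two : 2 * (reciprocalQuadProd s t).coeff 2 =
    2 * s.card + (∑ k ∈ s, t k) ^ 2 - ∑ k ∈ s, t k ^ 2 := by
  classical
  induction s using Finset.induction_on with
  | empty => simp [reciprocalQuadProd, Polynomial.coeff_one]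
  | insert a s ha ih =>
    rw [coeff_insert_add_two ha, coeff_zero, coeff_one, Finset.sum_insert ha,
      Finset.sum_insert ha, Finset.card_insert_of_notMem ha]
    push_cast
    linear_combination ih

lemma six_mul_coeff_three : 6 * (reciprocalQuadProd s t).coeff 3 =
    -((∑ k ∈ s, t k) ^ 3 - 3 * (∑ k ∈ s, t k) * (∑ k ∈ s, t k ^ 2) + 2 * ∑ k ∈ s, t k ^ 3)
      - 6 * (s.card - 1) * ∑ k ∈ s, t k := by
  classical
  induction s using Finset.induction_on with
  | empty => simp [reciprocalQuadProd, Polynomial.coeff_one]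
  | insert a s ha ih =>
    rw [coeff_insert_add_two ha, coeff_one, Finset.sum_insert ha,
      Finset.sum_insert ha, Finset.sum_insert ha, Finset.card_insert_of_notMem ha]
    push_cast
    linear_combination ih - 3 * t a * two_mul_coeff_two s t

variable {s t} in
lemma two_mul_sum_cube_mem {S : Subring R} (h₁ : ∑ k ∈ s, t k ∈ S) (h₂ : ∑ k ∈ s, t k ^ 2 ∈ S)
    (hcoeff : (reciprocalQuadProd s t).coeff 3 ∈ S) : 2 * ∑ k ∈ s, t k ^ 3 ∈ S := by
  have hnewton : 2 * ∑ k ∈ s, t k ^ 3 = 3 * (∑ k ∈ s, t k) * (∑ k ∈ s, t k ^ 2)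
      - (∑ k ∈ s, t k) ^ 3 - 6 * (s.card - 1) * (∑ k ∈ s, t k)
      - 6 * (reciprocalQuadProd s t).coeff 3 := by
    linear_combination six_mul_coeff_three s t
  have hcard : 6 * ((s.card : R) - 1) ∈ S :=
    mul_mem (ofNat_mem S 6) (sub_mem (natCast_mem S _) (one_mem S))
  rw [hnewton]
  exact sub_mem (sub_mem (sub_mem (mul_mem (mul_mem (ofNat_mem S 3) h₁) h₂) (pow_mem h₁ 3))
    (mul_mem hcard h₁)) (mul_mem (ofNat_mem S 6) hcoeff)

end reciprocalQuadProd

section GeomSum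

lemma coeff_geom_sum_pow {R : Type*} [CommRing R] (L d : ℕ) {n : ℕ} (hn : n < 2 * L) :
    ((∑ i ∈ Finset.range L, (X : R[X]) ^ i) ^ (d + 1)).coeff n =
      (d + n).choose d - if L ≤ n then (d + 1) * ((d + (n - L)).choose d : R) else 0 := by
  have hgeom : ((∑ i ∈ Finset.range L, (X : R[X]) ^ i : R[X]) : PowerSeries R) =
      (1 - PowerSeries.X ^ L) * PowerSeries.mk 1 := by
    have h := congrArg (fun p : R[X] => (p : PowerSeries R)) (geom_sum_mul_neg (X : R[X]) L)
    simp only [coe_mul, coe_sub, coe_one, coe_X, coe_pow] at h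
    rw [← h, mul_assoc, mul_comm (1 - _), PowerSeries.mk_one_mul_one_sub_eq_one, mul_one]
  obtain ⟨r, hr⟩ := powAddExpansion (1 : PowerSeries R) (-PowerSeries.X ^ L) (d + 1)
  set c : PowerSeries R := PowerSeries.mk fun n => ((d + n).choose d : R) with hc
  have hexpand : (((∑ i ∈ Finset.range L, (X : R[X]) ^ i) ^ (d + 1) : R[X]) : PowerSeries R) =
      c - PowerSeries.C (d + 1 : R) * (PowerSeries.X ^ L * c)
        + PowerSeries.X ^ (2 * L) * (r * c) := by
    rw [coe_pow, hgeom, mul_pow, PowerSeries.mk_one_pow_eq_mk_choose_add, ← hc, sub_eq_add_neg, hr,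
      one_pow, one_pow, ← Nat.cast_succ, map_natCast]
    ring
  rw [← coeff_coe, hexpand, map_add, map_sub, PowerSeries.coeff_C_mul,
    PowerSeries.coeff_X_pow_mul', PowerSeries.coeff_X_pow_mul', if_neg hn.not_ge, add_zero,
    PowerSeries.coeff_mk, PowerSeries.coeff_mk, mul_ite, mul_zero]

end GeomSum

section RootsOfUnity

variable {K : Type*} [Field K] {ζ : K} {N : ℕ}

lemma sum_range_zpow_mul_eq_zero (hζ : IsPrimitiveRoot ζ N) {b : ℤ} (hb : ¬ (N : ℤ) ∣ b) :
    ∑ k ∈ Finset.range N, ζ ^ (b * k) = 0 := by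
  have hne : ζ ^ b ≠ 1 := mt (hζ.zpow_eq_one_iff_dvd b).mp hb
  have hpow : (ζ ^ b) ^ N = 1 := by
    rw [← zpow_natCast, zpow_comm, zpow_natCast, hζ.pow_eq_one, _root_.one_zpow]
  simp only [_root_.zpow_mul, zpow_natCast]
  rw [geom_sum_eq hne, hpow, sub_self, zero_div]

lemma sum_range_eval_mul_zpow (hζ : IsPrimitiveRoot ζ N) (Q : K[X]) {a : ℕ} (ha : a < N)
    (hQ : Q.natDegree < N + a) :
    ∑ k ∈ Finset.range N, ζ ^ (-(a * k : ℤ)) * Q.eval (ζ ^ k) = N * Q.coeff a := by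
  have hζ0 : ζ ≠ 0 := hζ.ne_zero (by omega)
  have hexp : ∀ k j : ℕ, ζ ^ (-(a * k : ℤ)) * (Q.coeff j * (ζ ^ k) ^ j) =
      Q.coeff j * ζ ^ ((j - a : ℤ) * k) := by
    intro k j
    rw [← pow_mul, ← zpow_natCast, mul_left_comm, ← zpow_add₀ hζ0]
    push_cast
    ring_nf
  simp only [eval_eq_sum_range' hQ, Finset.mul_sum, hexp]
  rw [Finset.sum_comm, Finset.sum_eq_single_of_mem a (Finset.mem_range.mpr (by omega))]
  · simp [mul_comm]
  · intro j hj hja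
    rw [← Finset.mul_sum, sum_range_zpow_mul_eq_zero hζ, mul_zero]
    intro hdvd
    have hj' := Finset.mem_range.mp hj
    have hzero := Int.eq_zero_of_abs_lt_dvd hdvd (abs_lt.mpr (by omega))
    omega

end RootsOfUnity

section PermMatrix

variable {n R : Type*} [DecidableEq n] (σ : Equiv.Perm n)

lemma permMatrix_apply [Zero R] [One R] (i j : n) :
    σ.permMatrix R i j = if j = σ i then 1 else 0 := by
  simp [PEquiv.toMatrix_apply, eq_comm]

variable [CommRing R] [Fintype n]

lemma charpoly_neg_permMatrix_map :
    (-σ.permMatrix ℤ).charpoly.map (Int.castRingHom R) = (-σ.permMatrix R).charpoly := by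
  rw [← charpoly_map]
  congr 1
  ext i j
  simp

lemma isUnit_coeff_zero_charpoly_neg_permMatrix :
    IsUnit ((-σ.permMatrix R).charpoly.coeff 0) := by
  have hdet : IsUnit (-σ.permMatrix R).det := by
    rw [det_neg, det_permutation]
    exact (isUnit_neg_one.pow _).mul (Units.map (Int.castRingHom R).toMonoidHom σ.sign).isUnit
  rw [det_eq_sign_charpoly_coeff] at hdet
  exact isUnit_of_mul_isUnit_right hdet

end PermMatrix

section GroverWalk

variable (m N : ℕ)

lemma two_mul_natCast_add_one_ne_zero : 2 * (m : ℂ) + 1 ≠ 0 :=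
  mod_cast (2 * m).succ_ne_zero

lemma zetaN_ne_zero : zetaN N ≠ 0 := Complex.exp_ne_zero _

lemma zetaN_two_mul_sq : zetaN (2 * N) ^ 2 = zetaN N := by
  rw [zetaN, zetaN, ← Complex.exp_nat_mul]
  congr 1
  push_cast
  rw [mul_div_assoc', mul_div_mul_left _ _ two_ne_zero]

lemma coinF_apply_eq_sub (i j : Fin (2 * m + 1)) :
    coinF m i j = 2 / (2 * (m : ℂ) + 1) - (Fin.revPerm.permMatrix ℂ) i j := by
  have hL := two_mul_natCast_add_one_ne_zero m
  have hij : (i : ℕ) + j = 2 * m ↔ j = Fin.rev i := by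
    rw [Fin.ext_iff, Fin.val_rev]
    omega
  simp only [coinF, permMatrix_apply, hij, Fin.revPerm_apply]
  split_ifs
  · field_simp
    ring
  · rw [sub_zero]

-- The symmetrised `E A E`, where `E² = Z^k`, isolates the dependence on `k` in a rank-one term,
-- since `E` commutes past the anti-diagonal permutation into its inverse.
lemma fFk_eq_charpoly_vecMulVec_sub (k : ℤ) {e : Fin (2 * m + 1) → ℂ}
    (he : ∀ i, e i ^ 2 = zetaN N ^ ((m - i : ℤ) * k)) (hrev : ∀ i, e i * e (Fin.rev i) = 1) :
    fFk m N k = (vecMulVec ((2 / (2 * (m : ℂ) + 1)) • e) e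
      - Fin.revPerm.permMatrix ℂ).charpoly := by
  have hZ : ZmatPow N m k = diagonal e * diagonal e := by
    rw [ZmatPow, diagonal_mul_diagonal]
    simp only [← he, sq]
  rw [fFk, hZ, Matrix.mul_assoc, charpoly_mul_comm]
  congr 1
  ext i j
  rw [mul_diagonal, diagonal_mul, coinF_apply_eq_sub, Matrix.sub_apply, vecMulVec_apply,
    Pi.smul_apply, smul_eq_mul]
  simp only [permMatrix_apply, Fin.revPerm_apply]
  split_ifs with h
  · subst h
    linear_combination -hrev i
  · ring

lemma exists_sq_eq_zetaN_zpow (k : ℤ) : ∃ e : Fin (2 * m + 1) → ℂ,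
    (∀ i, e i ^ 2 = zetaN N ^ ((m - i : ℤ) * k)) ∧ ∀ i, e i * e (Fin.rev i) = 1 := by
  refine ⟨fun i => zetaN (2 * N) ^ ((m - i : ℤ) * k), fun i => ?_, fun i => ?_⟩
  · rw [← zetaN_two_mul_sq N, ← zpow_natCast, ← zpow_natCast, zpow_comm]
  · have hexp : (m - i : ℤ) + (m - (Fin.rev i : ℕ)) = 0 := by
      rw [Fin.val_rev]
      omega
    rw [← zpow_add₀ (zetaN_ne_zero _), ← add_mul, hexp, zero_mul, zpow_zero]

/-- The parameter `t = (2/L) tr(Z^k)` of the factor `x² - t x + 1` of `f^{F,L}_{N,k}`. -/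
noncomputable def walkParam (k : ℕ) : ℂ :=
  2 / (2 * (m : ℂ) + 1) * (ZmatPow N m k).trace

lemma X_sq_sub_one_mul_fFk (k : ℕ) : (X ^ 2 - 1) * fFk m N k =
    (-Fin.revPerm.permMatrix ℤ : Matrix (Fin (2 * m + 1)) _ ℤ).charpoly.map (Int.castRingHom ℂ) *
      (X ^ 2 + 1 - C (walkParam m N k) * X) := by
  obtain ⟨e, hsq, hrev⟩ := exists_sq_eq_zetaN_zpow m N k
  have hL := two_mul_natCast_add_one_ne_zero m
  have hinvol : Fin.revPerm.permMatrix ℂ * Fin.revPerm.permMatrix ℂ =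
      (1 : Matrix (Fin (2 * m + 1)) _ ℂ) := by
    have hrev_mul : (Fin.revPerm : Equiv.Perm (Fin (2 * m + 1))) * Fin.revPerm = 1 :=
      Equiv.ext Fin.rev_rev
    rw [← permMatrix_mul, hrev_mul, permMatrix_one]
  have htrace : (2 / (2 * (m : ℂ) + 1)) • e ⬝ᵥ e = walkParam m N k := by
    simp only [walkParam, ZmatPow, trace_diagonal, ← hsq, sq, smul_dotProduct, smul_eq_mul]
    rfl
  have hcross : Fin.revPerm.permMatrix ℂ *ᵥ ((2 / (2 * (m : ℂ) + 1)) • e) ⬝ᵥ e = 2 := by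
    rw [mulVec_smul, smul_dotProduct, permMatrix_mulVec, dotProduct_comm]
    simp only [dotProduct, Function.comp_apply, Fin.revPerm_apply, hrev, Finset.sum_const,
      Finset.card_univ, Fintype.card_fin, nsmul_eq_mul, smul_eq_mul]
    push_cast
    field_simp
  rw [fFk_eq_charpoly_vecMulVec_sub m N k hsq hrev,
    charpoly_vecMulVec_sub_of_mul_self_eq_one hinvol, htrace, hcross,
    ← charpoly_neg_permMatrix_map, C_ofNat]
  ring

lemma X_sq_sub_one_pow_mul_fF : (X ^ 2 - 1) ^ N * fF m N =
    ((-Fin.revPerm.permMatrix ℤ : Matrix (Fin (2 * m + 1)) _ ℤ).charpoly ^ N).map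
      (Int.castRingHom ℂ) * reciprocalQuadProd (Finset.range N) (walkParam m N) := by
  have h := Finset.prod_congr (Eq.refl (Finset.range N)) fun k _ => X_sq_sub_one_mul_fFk m N k
  rwa [Finset.prod_mul_distrib, Finset.prod_mul_distrib, Finset.prod_const, Finset.prod_const,
    Finset.card_range, ← Polynomial.map_pow, ← fF, ← reciprocalQuadProd] at h

lemma coeff_reciprocalQuadProd_mem_range_of_coeff_fF {n : ℕ}
    (hquad : ∀ j < n, (reciprocalQuadProd (Finset.range N) (walkParam m N)).coeff j ∈
      (Int.castRingHom ℂ).range)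
    (hF : (fF m N).coeff n ∈ (Int.castRingHom ℂ).range) :
    (reciprocalQuadProd (Finset.range N) (walkParam m N)).coeff n ∈
      (Int.castRingHom ℂ).range := by
  have hfac : ((X ^ 2 - 1 : ℤ[X]) ^ N).map (Int.castRingHom ℂ) * fF m N = _ :=
    Eq.trans (by simp) (X_sq_sub_one_pow_mul_fF m N)
  have hunit : IsUnit (((X ^ 2 - 1 : ℤ[X]) ^ N).coeff 0) := by
    simpa [coeff_zero_eq_eval_zero] using isUnit_neg_one.pow N
  have hlow : ∀ j < n, (fF m N).coeff j ∈ (Int.castRingHom ℂ).range :=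
    coeff_mem_range_of_coeff_map_mul_mem_range hunit (hfac ▸ coeff_map_mul_mem_range _ hquad)
  have hall : ∀ j < n + 1, (fF m N).coeff j ∈ (Int.castRingHom ℂ).range := by
    intro j hj
    rcases Nat.lt_succ_iff_lt_or_eq.mp hj with h | rfl
    exacts [hlow j h, hF]
  refine coeff_mem_range_of_coeff_map_mul_mem_range ?_ (hfac ▸ coeff_map_mul_mem_range _ hall)
    n n.lt_succ_self
  rw [coeff_zero_eq_eval_zero, eval_pow, ← coeff_zero_eq_eval_zero]
  exact (isUnit_coeff_zero_charpoly_neg_permMatrix _).pow N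

lemma trace_ZmatPow_natCast (k : ℕ) : (ZmatPow N m k).trace = zetaN N ^ (-(m * k : ℤ)) *
    (∑ i ∈ Finset.range (2 * m + 1), (X : ℂ[X]) ^ i).eval (zetaN N ^ k) := by
  rw [ZmatPow, trace_diagonal, eval_finsetSum, ← Fin.sum_univ_eq_sum_range
    (fun i => ((X : ℂ[X]) ^ i).eval (zetaN N ^ k)), Finset.mul_sum, ← Equiv.sum_comp Fin.revPerm]
  refine Finset.sum_congr rfl fun i _ => ?_
  have hi : (m : ℤ) - ((Fin.revPerm i : Fin (2 * m + 1)) : ℕ) = i - m := by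
    rw [Fin.revPerm_apply, Fin.val_rev]
    omega
  rw [hi, eval_pow, eval_X, ← pow_mul, ← zpow_natCast, ← zpow_add₀ (zetaN_ne_zero _)]
  push_cast
  ring_nf

variable {m N}

lemma sum_trace_ZmatPow_pow {r : ℕ} (hr : r * m < N) :
    ∑ k ∈ Finset.range N, (ZmatPow N m k).trace ^ r =
      N * ((∑ i ∈ Finset.range (2 * m + 1), (X : ℂ[X]) ^ i) ^ r).coeff (r * m) := by
  have hdeg : ((∑ i ∈ Finset.range (2 * m + 1), (X : ℂ[X]) ^ i) ^ r).natDegree < N + r * m := by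
    have h1 : (∑ i ∈ Finset.range (2 * m + 1), (X : ℂ[X]) ^ i).natDegree ≤ 2 * m :=
      natDegree_sum_le_of_forall_le _ _ fun i hi =>
        (natDegree_X_pow_le i).trans (Nat.lt_succ_iff.mp (Finset.mem_range.mp hi))
    have h2 := natDegree_pow_le_of_le r h1
    linarith
  rw [← sum_range_eval_mul_zpow (Complex.isPrimitiveRoot_exp N (by omega)) _ hr hdeg]
  refine Finset.sum_congr rfl fun k _ => ?_
  rw [trace_ZmatPow_natCast, mul_pow, eval_pow, ← zpow_natCast, ← _root_.zpow_mul, ← zetaN]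
  push_cast
  ring_nf

lemma sum_trace_ZmatPow (h : m < N) :
    ∑ k ∈ Finset.range N, (ZmatPow N m k).trace = N := by
  have hsum := sum_trace_ZmatPow_pow (r := 1) (by rwa [one_mul])
  rw [coeff_geom_sum_pow _ 0 (by omega), if_neg (by omega)] at hsum
  simpa using hsum

lemma sum_trace_ZmatPow_sq (h : 2 * m < N) :
    ∑ k ∈ Finset.range N, (ZmatPow N m k).trace ^ 2 = N * (2 * m + 1) := by
  rw [sum_trace_ZmatPow_pow h, coeff_geom_sum_pow _ 1 (by omega), if_neg (by omega),
    Nat.choose_one_right]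
  push_cast
  ring

lemma sum_trace_ZmatPow_cube (h : 3 * m < N) :
    ∑ k ∈ Finset.range N, (ZmatPow N m k).trace ^ 3 = N * (3 * m ^ 2 + 3 * m + 1) := by
  rw [sum_trace_ZmatPow_pow h, coeff_geom_sum_pow _ 2 (by omega), Nat.cast_choose_two]
  rcases m with _ | m
  · norm_num
  · rw [if_pos (by omega), show 2 + (3 * (m + 1) - (2 * (m + 1) + 1)) = m + 2 by omega,
      Nat.cast_choose_two]
    push_cast
    ring

variable {c : ℕ}

lemma three_mul_lt_sq_mul (hc : 0 < c) : 3 * m < (2 * m + 1) ^ 2 * c := by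
  nlinarith [Nat.le_mul_of_pos_right ((2 * m + 1) ^ 2) hc]

lemma sum_walkParam (hc : 0 < c) :
    ∑ k ∈ Finset.range ((2 * m + 1) ^ 2 * c), walkParam m ((2 * m + 1) ^ 2 * c) k =
      2 * (2 * m + 1) * c := by
  have hL := two_mul_natCast_add_one_ne_zero m
  have hlt := three_mul_lt_sq_mul (m := m) hc
  simp only [walkParam]
  rw [← Finset.mul_sum, sum_trace_ZmatPow (by omega)]
  push_cast
  field_simp

lemma sum_walkParam_sq (hc : 0 < c) :
    ∑ k ∈ Finset.range ((2 * m + 1) ^ 2 * c), walkParam m ((2 * m + 1) ^ 2 * c) k ^ 2 =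
      4 * (2 * m + 1) * c := by
  have hL := two_mul_natCast_add_one_ne_zero m
  have hlt := three_mul_lt_sq_mul (m := m) hc
  simp only [walkParam, mul_pow]
  rw [← Finset.mul_sum, sum_trace_ZmatPow_sq (by omega)]
  push_cast
  field_simp
  ring

lemma mul_sum_walkParam_cube (hc : 0 < c) :
    (2 * m + 1) *
      ∑ k ∈ Finset.range ((2 * m + 1) ^ 2 * c), walkParam m ((2 * m + 1) ^ 2 * c) k ^ 3 =
        2 * c * (3 * (2 * m + 1) ^ 2 + 1) := by
  have hL := two_mul_natCast_add_one_ne_zero m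
  simp only [walkParam, mul_pow]
  rw [← Finset.mul_sum, sum_trace_ZmatPow_cube (three_mul_lt_sq_mul hc)]
  push_cast
  field_simp
  ring

lemma sum_walkParam_mem_range (hc : 0 < c) :
    ∑ k ∈ Finset.range ((2 * m + 1) ^ 2 * c), walkParam m ((2 * m + 1) ^ 2 * c) k ∈
      (Int.castRingHom ℂ).range :=
  ⟨2 * (2 * m + 1) * c, by simp [sum_walkParam hc]⟩

lemma sum_walkParam_sq_mem_range (hc : 0 < c) :
    ∑ k ∈ Finset.range ((2 * m + 1) ^ 2 * c), walkParam m ((2 * m + 1) ^ 2 * c) k ^ 2 ∈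
      (Int.castRingHom ℂ).range :=
  ⟨4 * (2 * m + 1) * c, by simp [sum_walkParam_sq hc]⟩

lemma coeff_reciprocalQuadProd_walkParam_mem_range (hc : 0 < c) : ∀ j < 3,
    (reciprocalQuadProd (Finset.range ((2 * m + 1) ^ 2 * c))
      (walkParam m ((2 * m + 1) ^ 2 * c))).coeff j ∈ (Int.castRingHom ℂ).range := by
  intro j hj
  interval_cases j
  · rw [reciprocalQuadProd.coeff_zero]
    exact one_mem _
  · rw [reciprocalQuadProd.coeff_one]
    exact neg_mem (sum_walkParam_mem_range hc)
  · have h := reciprocalQuadProd.two_mul_coeff_two (Finset.range ((2 * m + 1) ^ 2 * c))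
      (walkParam m ((2 * m + 1) ^ 2 * c))
    rw [sum_walkParam hc, sum_walkParam_sq hc, Finset.card_range] at h
    refine ⟨(2 * m + 1) ^ 2 * c + 2 * ((2 * m + 1) * c) ^ 2 - 2 * (2 * m + 1) * c, ?_⟩
    push_cast [eq_intCast] at h ⊢
    linear_combination -h / 2

end GroverWalk

theorem stmt15_general {m N : ℕ} (hdvd : (2 * m + 1) ^ 2 ∣ N) (hndvd : ¬ (2 * m + 1) ^ 3 ∣ N) :
    ¬ ∃ z : ℤ, (fF m N).coeff 3 = (z : ℂ) := by
  rintro ⟨z, hz⟩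
  obtain ⟨c, rfl⟩ := hdvd
  have hndvd' : ¬ (2 * m + 1) ∣ c := fun h => hndvd (pow_succ (2 * m + 1) 2 ▸ mul_dvd_mul_left _ h)
  have hc : 0 < c := Nat.pos_of_ne_zero fun h => hndvd' (h ▸ dvd_zero _)
  have hcoeff := coeff_reciprocalQuadProd_mem_range_of_coeff_fF m _
    (coeff_reciprocalQuadProd_walkParam_mem_range hc) ⟨z, hz.symm⟩
  obtain ⟨w, hw⟩ := reciprocalQuadProd.two_mul_sum_cube_mem
    (sum_walkParam_mem_range hc) (sum_walkParam_sq_mem_range hc) hcoeff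
  have hwℂ : (2 * m + 1) * (w : ℂ) = 4 * c * (3 * (2 * m + 1) ^ 2 + 1) := by
    rw [eq_intCast] at hw
    linear_combination (2 * m + 1) * hw + 2 * mul_sum_walkParam_cube hc
  have hwℤ : (2 * m + 1) * w = 4 * c * (3 * (2 * m + 1) ^ 2 + 1) := by exact_mod_cast hwℂ
  have hdvd4 : ((2 * m + 1 : ℕ) : ℤ) ∣ ((2 ^ 2 * c : ℕ) : ℤ) :=
    ⟨w - 12 * c * (2 * m + 1), by push_cast; linear_combination -hwℤ⟩
  have hcop : Nat.Coprime (2 * m + 1) (2 ^ 2) := Nat.Coprime.pow_right 2 (by simp)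
  exact hndvd' (hcop.dvd_of_dvd_mul_left (Int.natCast_dvd_natCast.mp hdvd4))

/-- For an odd prime `L = 2m+1 ≥ 3`, the polynomial `f^{F,L}_{L²}` does not
have all integer coefficients; in particular its coefficient of `x³` is not an integer. -/
theorem stmt15 (m : ℕ) (hm : 1 ≤ m) (hp : Nat.Prime (2*m+1)) :
    (¬ ∀ i : ℕ, ∃ z : ℤ, (fF m ((2*m+1)^2)).coeff i = (z : ℂ)) ∧
    ¬ ∃ z : ℤ, (fF m ((2*m+1)^2)).coeff 3 = (z : ℂ) := by
  have h := stmt15_general (m := m) dvd_rfl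
    ((Nat.pow_dvd_pow_iff_le_right (by omega)).not.mpr (by norm_num))
  exact ⟨fun hall => h (hall 3), h⟩
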